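/- (Lemma: differential ε-lumpability implies ε-lumpability.) Let ξ : X → Z be a reaction coordinate with a disintegration family (μ_z), and suppose the system is differentially ε-lumpable with respect to ξ and (μ_z), i.e. (1/|Z|) ∫_Z ∫∫ (∫_X |p(x₁,y) − p(x₂,y)| dy) dμ_z(x₁) dμ_z(x₂) dz ≤ ε. Define p_L : Z × X → [0,∞) by p_L(z,y) := ∫ p(x',y) dμ_z(x'). Then (1/|Z|) ∫_Z ∫ (∫_X |p_L(z,y) − p(x,y)| dy) dμ_z(x) dz ≤ ε, and consequently, by the disintegration identity, the system is ε-lumpable with respect to ξ and p_L. -/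

import Mathlib

open MeasureTheory

open ProbabilityTheory Set

/-! Jensen's inequality on a single level set gives
`∫ |∫ p(x', y) dμ_z(x') - p(x, y)| dy ≤ ∫ ∫ |p(x', y) - p(x, y)| dy dμ_z(x')`; integrating over
`x` and `z` yields the level-set inequality. For Bochner integrals this needs the right-hand side
to be integrable in `z`. Measurability of `z ↦ μ_z(s)` is not part of a disintegration family, but
it follows from the disintegration identity for indicators: otherwise neither `μ_z(s)` nor
`μ_z(sᶜ)` is integrable in `z`, both integrals take the junk value `0`, and the whole mass
`μ(s) + μ(sᶜ)` vanishes. On a countably generated space `μ_z` is then almost everywhere a kernel.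
The same identity shows that `ξ` pushes `μ` forward to Lebesgue measure on `Z`, so statements
about almost every `z` pull back to almost every `x`; this makes the lumping error integrable. -/

variable {α β γ : Type*} [MeasurableSpace α] [MeasurableSpace β] [MeasurableSpace γ]

/-- The density `y ↦ ∫ p(x, y) dν(x)` of the transition started from the distribution `ν`. For the
members `μ_z` of a disintegration family it is the reduced transition density `p_L(z, ·)`. -/
noncomputable def effectiveDensity (p : α → γ → ℝ) (ν : Measure α) (y : γ) : ℝ :=
  ∫ x, p x y ∂ν

/-- `ν` is a disintegration family of `μ` for the reaction coordinate `ξ`, with `m` in the role of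
Lebesgue measure on `Z`. The identity is required for Bochner integrals only, so measurability of
`z ↦ ν z s` is not built in; the conditions on single members are imposed `m`-almost everywhere. -/
structure IsDisintegration (ξ : α → β) (μ : Measure α) (m : Measure β) (ν : β → Measure α) :
    Prop where
  ae_isProbabilityMeasure : ∀ᵐ z ∂m, IsProbabilityMeasure (ν z)
  ae_ae_eq : ∀ᵐ z ∂m, ∀ᵐ x ∂ν z, ξ x = z
  integral_integral : ∀ h : α → ℝ, Integrable h μ → ∫ z, ∫ x, h x ∂ν z ∂m = ∫ x, h x ∂μ

/-- `ε`-lumpability of the transition density `p` with respect to `ξ` and the reduced density `q`;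
`m` stands for Lebesgue measure on `Z` and `ρ` for Lebesgue measure on `X`. -/
def IsLumpable (ρ : Measure γ) (p : α → γ → ℝ) (μ : Measure α) (m : Measure β) (ξ : α → β)
    (q : β → γ → ℝ) (ε : ℝ) : Prop :=
  (m.real univ)⁻¹ * ∫ x, ∫ y, |p x y - q (ξ x) y| ∂ρ ∂μ ≤ ε

/-- Differential `ε`-lumpability of the transition density `p` with respect to the family `ν`;
`m` stands for Lebesgue measure on `Z` and `ρ` for Lebesgue measure on `X`. -/
def IsDifferentiallyLumpable (ρ : Measure γ) (p : α → γ → ℝ) (m : Measure β) (ν : β → Measure α)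
    (ε : ℝ) : Prop :=
  (m.real univ)⁻¹ * ∫ z, ∫ x₂, ∫ x₁, ∫ y, |p x₁ y - p x₂ y| ∂ρ ∂ν z ∂ν z ∂m ≤ ε

section Average

variable {ν : Measure α} {ρ : Measure γ} {p : α → γ → ℝ} {f g : γ → ℝ}

theorem integral_abs_sub_le_add (hf : Integrable f ρ) (hg : Integrable g ρ) (hf0 : ∀ y, 0 ≤ f y)
    (hg0 : ∀ y, 0 ≤ g y) : ∫ y, |f y - g y| ∂ρ ≤ ∫ y, f y ∂ρ + ∫ y, g y ∂ρ := by
  rw [← integral_add hf hg]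
  refine integral_mono (hf.sub hg).abs (hf.add hg) fun y => ?_
  exact abs_sub_le_iff.2 ⟨by linarith [hg0 y], by linarith [hf0 y]⟩

theorem integrable_uncurry_of_ae_integral_eq_one [IsFiniteMeasure ν] [SFinite ρ]
    (hpm : Measurable (Function.uncurry p)) (hp0 : ∀ x y, 0 ≤ p x y)
    (hp1 : ∀ᵐ x ∂ν, ∫ y, p x y ∂ρ = 1) : Integrable (Function.uncurry p) (ν.prod ρ) := by
  refine (integrable_prod_iff hpm.aestronglyMeasurable).2 ⟨?_, ?_⟩
  · filter_upwards [hp1] with x hx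
    exact .of_integral_ne_zero (hx.trans_ne one_ne_zero)
  · refine (integrable_const (1 : ℝ)).congr ?_
    filter_upwards [hp1] with x hx
    simp only [Function.uncurry_apply_pair, Real.norm_of_nonneg (hp0 _ _), hx]

variable [IsProbabilityMeasure ν]

theorem integral_mem_Icc_zero {u : α → ℝ} {C : ℝ} (hu : ∀ᵐ x ∂ν, u x ∈ Icc 0 C) :
    ∫ x, u x ∂ν ∈ Icc 0 C := by
  have hu0 : 0 ≤ᵐ[ν] u := hu.mono fun x hx => hx.1
  refine ⟨integral_nonneg_of_ae hu0, ?_⟩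
  simpa using integral_mono_of_nonneg hu0 (integrable_const C) (hu.mono fun x hx => hx.2)

theorem integral_integral_abs_sub_mem_Icc (hp0 : ∀ x y, 0 ≤ p x y)
    (hp1 : ∀ᵐ x ∂ν, ∫ y, p x y ∂ρ = 1) (hg0 : ∀ y, 0 ≤ g y) (hg1 : ∫ y, g y ∂ρ = 1) :
    ∫ x, ∫ y, |p x y - g y| ∂ρ ∂ν ∈ Icc 0 2 := by
  refine integral_mem_Icc_zero ?_
  filter_upwards [hp1] with x hx
  have hpx : Integrable (p x) ρ := .of_integral_ne_zero (hx.trans_ne one_ne_zero)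
  have hg : Integrable g ρ := .of_integral_ne_zero (hg1.trans_ne one_ne_zero)
  refine ⟨integral_nonneg fun y => abs_nonneg _, ?_⟩
  linarith [integral_abs_sub_le_add hpx hg (hp0 x) hg0]

theorem integral_abs_effectiveDensity_sub_le [SFinite ρ]
    (hp : Integrable (Function.uncurry p) (ν.prod ρ)) (hg : Integrable g ρ) :
    ∫ y, |effectiveDensity p ν y - g y| ∂ρ ≤ ∫ x, ∫ y, |p x y - g y| ∂ρ ∂ν := by
  have hpg : Integrable (Function.uncurry fun x y => |p x y - g y|) (ν.prod ρ) :=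
    (hp.sub (hg.comp_snd ν)).abs
  rw [integral_integral_swap hpg]
  refine integral_mono_of_nonneg (.of_forall fun y => abs_nonneg _) hpg.integral_prod_right ?_
  filter_upwards [hp.prod_left_ae] with y (hy : Integrable (fun x => p x y) ν)
  calc |effectiveDensity p ν y - g y| = |∫ x, (p x y - g y) ∂ν| := by
        rw [integral_sub hy (integrable_const _), integral_const, probReal_univ, one_smul,
          effectiveDensity]
    _ ≤ ∫ x, |p x y - g y| ∂ν := abs_integral_le_integral_abs

end Average

section Kernel

variable {κ : Kernel β α} [IsSFiniteKernel κ] {ρ : Measure γ} [SFinite ρ] {p : α → γ → ℝ}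

theorem stronglyMeasurable_integral_abs_sub (hpm : Measurable (Function.uncurry p)) :
    StronglyMeasurable fun q : α × α => ∫ y, |p q.2 y - p q.1 y| ∂ρ := by
  have h₁ : Measurable fun w : (α × α) × γ => p w.1.1 w.2 :=
    hpm.comp (measurable_fst.fst.prodMk measurable_snd)
  have h₂ : Measurable fun w : (α × α) × γ => p w.1.2 w.2 :=
    hpm.comp (measurable_fst.snd.prodMk measurable_snd)
  exact (h₂.sub h₁).abs.stronglyMeasurable.integral_prod_right'

theorem stronglyMeasurable_integral_integral_abs_sub (hpm : Measurable (Function.uncurry p)) :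
    StronglyMeasurable fun w : β × α => ∫ x', ∫ y, |p x' y - p w.2 y| ∂ρ ∂κ w.1 :=
  StronglyMeasurable.integral_kernel_prod_right' (κ := κ.comap Prod.fst measurable_fst)
    ((stronglyMeasurable_integral_abs_sub hpm).comp_measurable
      (measurable_fst.snd.prodMk measurable_snd))

theorem stronglyMeasurable_integral_abs_effectiveDensity_sub
    (hpm : Measurable (Function.uncurry p)) :
    StronglyMeasurable fun w : β × α => ∫ y, |effectiveDensity p (κ w.1) y - p w.2 y| ∂ρ := by
  have hq : StronglyMeasurable fun w : (β × α) × γ => effectiveDensity p (κ w.1.1) w.2 :=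
    StronglyMeasurable.integral_kernel_prod_right'
      (κ := κ.comap (fun w : (β × α) × γ => w.1.1) measurable_fst.fst)
      (hpm.comp (measurable_snd.prodMk measurable_fst.snd)).stronglyMeasurable
  have hp : Measurable fun w : (β × α) × γ => p w.1.2 w.2 :=
    hpm.comp (measurable_fst.snd.prodMk measurable_snd)
  exact (hq.measurable.sub hp).abs.stronglyMeasurable.integral_prod_right'

end Kernel

theorem integral_integral_abs_effectiveDensity_sub_le {ν : Measure α} [IsProbabilityMeasure ν]
    {ρ : Measure γ} [SFinite ρ] {p : α → γ → ℝ} (hpm : Measurable (Function.uncurry p))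
    (hp0 : ∀ x y, 0 ≤ p x y) (hp1 : ∀ᵐ x ∂ν, ∫ y, p x y ∂ρ = 1) :
    ∫ x, ∫ y, |effectiveDensity p ν y - p x y| ∂ρ ∂ν ≤
      ∫ x₂, ∫ x₁, ∫ y, |p x₁ y - p x₂ y| ∂ρ ∂ν ∂ν := by
  refine integral_mono_of_nonneg (.of_forall fun x => integral_nonneg fun y => abs_nonneg _) ?_ ?_
  · refine .of_mem_Icc 0 2
      (stronglyMeasurable_integral_abs_sub hpm).integral_prod_right'.measurable.aemeasurable ?_
    filter_upwards [hp1] with x hx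
    exact integral_integral_abs_sub_mem_Icc hp0 hp1 (hp0 x) hx
  · filter_upwards [hp1] with x hx
    exact integral_abs_effectiveDensity_sub_le
      (integrable_uncurry_of_ae_integral_eq_one hpm hp0 hp1)
      (.of_integral_ne_zero (hx.trans_ne one_ne_zero))

theorem exists_countable_isPiSystem_generateFrom_eq (α : Type*) [mα : MeasurableSpace α]
    [MeasurableSpace.CountablyGenerated α] :
    ∃ C : Set (Set α), C.Countable ∧ IsPiSystem C ∧ mα = .generateFrom C :=
  ⟨generateSetAlgebra (MeasurableSpace.countableGeneratingSet α),
    countable_generateSetAlgebra MeasurableSpace.countable_countableGeneratingSet,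
    fun _ hs _ ht _ => isSetAlgebra_generateSetAlgebra.inter_mem hs ht,
    by rw [generateFrom_generateSetAlgebra_eq, MeasurableSpace.generateFrom_countableGeneratingSet]⟩

theorem exists_kernel_ae_eq [MeasurableSpace.CountablyGenerated α] {m : Measure β}
    {ν : β → Measure α} (hν : ∀ᵐ z ∂m, IsProbabilityMeasure (ν z))
    (hmeas : ∀ s, MeasurableSet s → AEMeasurable (fun z => ν z s) m) :
    ∃ κ : Kernel β α, IsFiniteKernel κ ∧ ∀ᵐ z ∂m, κ z = ν z := by
  classical
  obtain ⟨C, hC, hpi, hgen⟩ := exists_countable_isPiSystem_generateFrom_eq α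
  have : Countable C := hC
  have hCmeas (s : C) : MeasurableSet (s : Set α) :=
    hgen ▸ MeasurableSpace.measurableSet_generateFrom s.2
  have hev : AEMeasurable (fun z (s : C) => ν z s) m :=
    aemeasurable_pi_iff.2 fun s => hmeas s (hCmeas s)
  -- As `C` is countable, all evaluations on `C` are measurable off one and the same null set.
  obtain ⟨G, hG, hGm, hGood⟩ := (hν.and hev.ae_eq_mk).exists_measurable_mem
  let η : β → Measure α := G.indicator ν
  have hη (s : Set α) : (fun z => η z s) = G.indicator fun z => ν z s := by
    funext z
    by_cases hz : z ∈ G <;> simp [η, hz]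
  have hη_le (z : β) : η z univ ≤ 1 := by
    by_cases hz : z ∈ G
    · have := (hGood z hz).1
      simp [η, hz]
    · simp [η, hz]
  have (z : β) : IsFiniteMeasure (η z) := ⟨(hη_le z).trans_lt ENNReal.one_lt_top⟩
  have hηm : Measurable η := by
    refine .measure_of_isPiSystem hgen hpi (fun s hs => ?_) ?_
    · rw [hη, indicator_congr fun z hz => congrFun (hGood z hz).2 ⟨s, hs⟩]
      exact ((measurable_pi_apply _).comp hev.measurable_mk).indicator hGm
    · rw [hη, indicator_congr fun z hz => (hGood z hz).1.measure_univ]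
      exact measurable_const.indicator hGm
  refine ⟨⟨η, hηm⟩, ⟨⟨1, ENNReal.one_lt_top, hη_le⟩⟩, ?_⟩
  filter_upwards [hG] with z hz
  exact indicator_of_mem hz ν

namespace IsDisintegration

variable {ξ : α → β} {μ : Measure α} {m : Measure β} {ν : β → Measure α}

theorem integral_comp_fiber (hd : IsDisintegration ξ μ m ν) {F : β → α → ℝ}
    (hF : Integrable (fun x => F (ξ x) x) μ) :
    ∫ x, F (ξ x) x ∂μ = ∫ z, ∫ x, F z x ∂ν z ∂m := by
  rw [← hd.integral_integral _ hF]
  refine integral_congr_ae ?_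
  filter_upwards [hd.ae_ae_eq] with z hz
  refine integral_congr_ae ?_
  filter_upwards [hz] with x hx
  rw [hx]

variable [IsFiniteMeasure μ]

theorem integral_measureReal (hd : IsDisintegration ξ μ m ν) {s : Set α} (hs : MeasurableSet s) :
    ∫ z, (ν z).real s ∂m = μ.real s := by
  simpa only [integral_indicator_one hs] using
    hd.integral_integral (s.indicator 1) ((integrable_const 1).indicator hs)

theorem measureReal_univ_eq (hd : IsDisintegration ξ μ m ν) : m.real univ = μ.real univ := by
  calc m.real univ = ∫ _, (1 : ℝ) ∂m := by simp
    _ = ∫ z, (ν z).real univ ∂m := by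
      refine integral_congr_ae ?_
      filter_upwards [hd.ae_isProbabilityMeasure] with z _
      exact probReal_univ.symm
    _ = μ.real univ := hd.integral_measureReal .univ

variable [IsFiniteMeasure m]

theorem integrable_measureReal (hd : IsDisintegration ξ μ m ν) {s : Set α}
    (hs : MeasurableSet s) : Integrable (fun z => (ν z).real s) m := by
  by_contra hns
  have hnsc : ¬ Integrable (fun z => (ν z).real sᶜ) m := fun hsc => hns <| by
    refine ((integrable_const (1 : ℝ)).sub hsc).congr ?_
    filter_upwards [hd.ae_isProbabilityMeasure] with z _
    simp [probReal_compl_eq_one_sub hs]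
  have hm : m.real univ = 0 := by
    rw [hd.measureReal_univ_eq, ← measureReal_add_measureReal_compl hs,
      ← hd.integral_measureReal hs, ← hd.integral_measureReal hs.compl, integral_undef hns,
      integral_undef hnsc, add_zero]
  rw [measureReal_eq_zero_iff, Measure.measure_univ_eq_zero] at hm
  exact hns (hm ▸ integrable_zero_measure)

theorem lintegral_measure (hd : IsDisintegration ξ μ m ν) {s : Set α} (hs : MeasurableSet s) :
    ∫⁻ z, ν z s ∂m = μ s := by
  rw [← ofReal_measureReal (μ := μ), ← hd.integral_measureReal hs,
    ofReal_integral_eq_lintegral_ofReal (hd.integrable_measureReal hs)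
      (.of_forall fun _ => measureReal_nonneg)]
  refine lintegral_congr_ae ?_
  filter_upwards [hd.ae_isProbabilityMeasure] with z _
  exact (ofReal_measureReal (μ := ν z)).symm

theorem map_eq (hd : IsDisintegration ξ μ m ν) (hξ : Measurable ξ) : μ.map ξ = m := by
  ext s hs
  rw [Measure.map_apply hξ hs, ← hd.lintegral_measure (hξ hs), ← lintegral_indicator_one hs]
  refine lintegral_congr_ae ?_
  filter_upwards [hd.ae_isProbabilityMeasure, hd.ae_ae_eq] with z _ hz
  rw [← Measure.map_apply hξ hs, Measure.map_congr hz, Measure.map_const, measure_univ, one_smul,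
    Measure.dirac_apply' z hs]

theorem ae_of_ae (hd : IsDisintegration ξ μ m ν) (hξ : Measurable ξ) {P : β → Prop}
    (hP : ∀ᵐ z ∂m, P z) : ∀ᵐ x ∂μ, P (ξ x) :=
  ae_of_ae_map hξ.aemeasurable (by rwa [hd.map_eq hξ])

variable [MeasurableSpace.CountablyGenerated α]

theorem exists_kernel (hd : IsDisintegration ξ μ m ν) :
    ∃ κ : Kernel β α, IsFiniteKernel κ ∧ (∀ᵐ z ∂m, κ z = ν z) ∧ κ ∘ₘ m = μ := by
  obtain ⟨κ, hκ, hκν⟩ := exists_kernel_ae_eq hd.ae_isProbabilityMeasure fun s hs => by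
    refine (hd.integrable_measureReal hs).aemeasurable.ennreal_ofReal.congr ?_
    filter_upwards [hd.ae_isProbabilityMeasure] with z _
    exact ofReal_measureReal
  refine ⟨κ, hκ, hκν, ?_⟩
  ext s hs
  rw [Measure.bind_apply hs κ.aemeasurable, ← hd.lintegral_measure hs]
  refine lintegral_congr_ae ?_
  filter_upwards [hκν] with z hz
  rw [hz]

theorem ae_ae_of_ae (hd : IsDisintegration ξ μ m ν) {P : α → Prop} (hP : ∀ᵐ x ∂μ, P x) :
    ∀ᵐ z ∂m, ∀ᵐ x ∂ν z, P x := by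
  obtain ⟨κ, _, hκν, rfl⟩ := hd.exists_kernel
  filter_upwards [hκν, Measure.ae_ae_of_ae_comp hP] with z hz hPz
  rwa [← hz]

section Lumping

variable {ρ : Measure γ} [SFinite ρ] {p : α → γ → ℝ}

theorem integrable_integral_integral_abs_sub (hd : IsDisintegration ξ μ m ν)
    (hpm : Measurable (Function.uncurry p)) (hp0 : ∀ x y, 0 ≤ p x y)
    (hp1 : ∀ᵐ x ∂μ, ∫ y, p x y ∂ρ = 1) :
    Integrable (fun z => ∫ x₂, ∫ x₁, ∫ y, |p x₁ y - p x₂ y| ∂ρ ∂ν z ∂ν z) m := by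
  obtain ⟨κ, _, hκν, -⟩ := hd.exists_kernel
  refine .of_mem_Icc 0 2 ?_ ?_
  · refine (stronglyMeasurable_integral_integral_abs_sub (κ := κ) (ρ := ρ)
      hpm).integral_kernel_prod_right' (κ := κ) |>.measurable.aemeasurable.congr ?_
    filter_upwards [hκν] with z hz
    rw [hz]
  · filter_upwards [hd.ae_isProbabilityMeasure, hd.ae_ae_of_ae hp1] with z _ hz
    refine integral_mem_Icc_zero ?_
    filter_upwards [hz] with x hx
    exact integral_integral_abs_sub_mem_Icc hp0 hz (hp0 x) hx

theorem integral_abs_effectiveDensity_sub_le_integral_abs_sub (hd : IsDisintegration ξ μ m ν)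
    (hpm : Measurable (Function.uncurry p)) (hp0 : ∀ x y, 0 ≤ p x y)
    (hp1 : ∀ᵐ x ∂μ, ∫ y, p x y ∂ρ = 1) :
    ∫ z, ∫ x, ∫ y, |effectiveDensity p (ν z) y - p x y| ∂ρ ∂ν z ∂m ≤
      ∫ z, ∫ x₂, ∫ x₁, ∫ y, |p x₁ y - p x₂ y| ∂ρ ∂ν z ∂ν z ∂m := by
  refine integral_mono_of_nonneg (.of_forall fun z => integral_nonneg fun x =>
    integral_nonneg fun y => abs_nonneg _) (hd.integrable_integral_integral_abs_sub hpm hp0 hp1) ?_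
  filter_upwards [hd.ae_isProbabilityMeasure, hd.ae_ae_of_ae hp1] with z _ hz
  exact integral_integral_abs_effectiveDensity_sub_le hpm hp0 hz

theorem integrable_integral_abs_effectiveDensity_sub (hd : IsDisintegration ξ μ m ν)
    (hξ : Measurable ξ) (hpm : Measurable (Function.uncurry p)) (hp0 : ∀ x y, 0 ≤ p x y)
    (hp1 : ∀ᵐ x ∂μ, ∫ y, p x y ∂ρ = 1) :
    Integrable (fun x => ∫ y, |effectiveDensity p (ν (ξ x)) y - p x y| ∂ρ) μ := by
  obtain ⟨κ, _, hκν, -⟩ := hd.exists_kernel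
  refine .of_mem_Icc 0 2 ?_ ?_
  · refine (stronglyMeasurable_integral_abs_effectiveDensity_sub (κ := κ) (ρ := ρ)
      hpm).measurable.comp (hξ.prodMk measurable_id) |>.aemeasurable.congr ?_
    filter_upwards [hd.ae_of_ae hξ hκν] with x hx
    simp only [Function.comp_apply, id, hx]
  · filter_upwards [hp1, hd.ae_of_ae hξ hd.ae_isProbabilityMeasure,
      hd.ae_of_ae hξ (hd.ae_ae_of_ae hp1)] with x hx _ hfiber
    refine ⟨integral_nonneg fun y => abs_nonneg _, ?_⟩
    exact (integral_abs_effectiveDensity_sub_le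
      (integrable_uncurry_of_ae_integral_eq_one hpm hp0 hfiber)
      (.of_integral_ne_zero (hx.trans_ne one_ne_zero))).trans
      (integral_integral_abs_sub_mem_Icc hp0 hfiber (hp0 x) hx).2

theorem integral_abs_sub_effectiveDensity_eq (hd : IsDisintegration ξ μ m ν)
    (hξ : Measurable ξ) (hpm : Measurable (Function.uncurry p)) (hp0 : ∀ x y, 0 ≤ p x y)
    (hp1 : ∀ᵐ x ∂μ, ∫ y, p x y ∂ρ = 1) :
    ∫ x, ∫ y, |p x y - effectiveDensity p (ν (ξ x)) y| ∂ρ ∂μ =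
      ∫ z, ∫ x, ∫ y, |effectiveDensity p (ν z) y - p x y| ∂ρ ∂ν z ∂m := by
  simp only [abs_sub_comm (p _ _)]
  exact hd.integral_comp_fiber (F := fun z x => ∫ y, |effectiveDensity p (ν z) y - p x y| ∂ρ)
    (hd.integrable_integral_abs_effectiveDensity_sub hξ hpm hp0 hp1)

end Lumping

end IsDisintegration

theorem differentially_lumpable_implies_lumpable_general
    [MeasurableSpace.CountablyGenerated α] {ξ : α → β} {μ : Measure α} [IsFiniteMeasure μ]
    {m : Measure β} [IsFiniteMeasure m] {ν : β → Measure α} {ρ : Measure γ} [SFinite ρ]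
    {p : α → γ → ℝ} {ε : ℝ} (hpm : Measurable (Function.uncurry p)) (hp0 : ∀ x y, 0 ≤ p x y)
    (hp1 : ∀ᵐ x ∂μ, ∫ y, p x y ∂ρ = 1) (hξ : Measurable ξ) (hd : IsDisintegration ξ μ m ν)
    (hdiff : IsDifferentiallyLumpable ρ p m ν ε) :
    (m.real univ)⁻¹ * ∫ z, ∫ x, ∫ y, |effectiveDensity p (ν z) y - p x y| ∂ρ ∂ν z ∂m ≤ ε ∧
      IsLumpable ρ p μ m ξ (fun z => effectiveDensity p (ν z)) ε := by
  have hlevel : (m.real univ)⁻¹ *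
      ∫ z, ∫ x, ∫ y, |effectiveDensity p (ν z) y - p x y| ∂ρ ∂ν z ∂m ≤ ε :=
    (mul_le_mul_of_nonneg_left
      (hd.integral_abs_effectiveDensity_sub_le_integral_abs_sub hpm hp0 hp1)
      (inv_nonneg.2 measureReal_nonneg)).trans hdiff
  refine ⟨hlevel, ?_⟩
  rwa [IsLumpable, hd.integral_abs_sub_effectiveDensity_eq hξ hpm hp0 hp1]

section Density

variable {ρ : Measure α} {π : α → ℝ}

theorem integral_withDensity_ofReal (hπ : AEMeasurable π ρ) (hπ0 : 0 ≤ᵐ[ρ] π) (h : α → ℝ) :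
    ∫ x, h x ∂ρ.withDensity (fun x => ENNReal.ofReal (π x)) = ∫ x, h x * π x ∂ρ := by
  rw [integral_withDensity_eq_integral_toReal_smul₀ hπ.ennreal_ofReal
    (.of_forall fun _ => ENNReal.ofReal_lt_top)]
  refine integral_congr_ae ?_
  filter_upwards [hπ0] with x hx
  rw [ENNReal.toReal_ofReal hx, smul_eq_mul, mul_comm]

theorem integrable_withDensity_ofReal_iff (hπ : AEMeasurable π ρ) (hπ0 : 0 ≤ᵐ[ρ] π)
    {h : α → ℝ} : Integrable h (ρ.withDensity fun x => ENNReal.ofReal (π x)) ↔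
      Integrable (fun x => h x * π x) ρ := by
  rw [integrable_withDensity_iff_integrable_smul₀' hπ.ennreal_ofReal
    (.of_forall fun _ => ENNReal.ofReal_lt_top)]
  refine integrable_congr ?_
  filter_upwards [hπ0] with x hx
  rw [ENNReal.toReal_ofReal hx, smul_eq_mul, mul_comm]

end Density

/-- (Differential ε-lumpability implies ε-lumpability,
with `p_L(z,y) := ∫ p(x',y) dμ_z(x')`.) -/
theorem differentially_lumpable_implies_lumpable
    {n r : ℕ} (X : Set (Fin n → ℝ)) (hX : MeasurableSet X)
    (Z : Set (Fin r → ℝ)) (hZ : MeasurableSet Z)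
    (hZpos : 0 < volume Z) (hZfin : volume Z < ⊤)
    (π : (Fin n → ℝ) → ℝ) (hπmeas : Measurable π) (hπcont : ContinuousOn π X)
    (hπpos : ∀ x ∈ X, 0 < π x) (hπbdd : BddAbove (π '' X))
    (hπprob : ∫ x in X, π x = 1)
    (p : (Fin n → ℝ) → (Fin n → ℝ) → ℝ)
    (hpmeas : Measurable (Function.uncurry p))
    (hpnonneg : ∀ x y, 0 ≤ p x y)
    (hpnorm : ∀ x ∈ X, ∫ y in X, p x y = 1)
    (ξ : (Fin n → ℝ) → Fin r → ℝ) (hξmeas : Measurable ξ) (hξmap : ∀ x ∈ X, ξ x ∈ Z)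
    -- disintegration family (μ_z) for ξ
    (ν : (Fin r → ℝ) → Measure (Fin n → ℝ))
    (hνprob : ∀ z ∈ Z, IsProbabilityMeasure (ν z))
    (hνconc : ∀ z ∈ Z, ν z {x | ξ x ≠ z} = 0)
    (hνdis : ∀ h : (Fin n → ℝ) → ℝ, IntegrableOn (fun x => h x * π x) X →
      ∫ z in Z, ∫ x, h x ∂ν z = ∫ x in X, h x * π x)
    (ε : ℝ) (hε : 0 ≤ ε)
    -- differential ε-lumpability with respect to ξ and (μ_z)
    (hdiff : (volume Z).toReal⁻¹ *
      ∫ z in Z, ∫ x₂, ∫ x₁, (∫ y in X, |p x₁ y - p x₂ y|) ∂ν z ∂ν z ≤ ε) :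
    -- the level-set inequality for p_L(z,y) := ∫ p(x',y) dμ_z(x') …
    ((volume Z).toReal⁻¹ *
      ∫ z in Z, ∫ x, (∫ y in X, |(∫ x', p x' y ∂ν z) - p x y|) ∂ν z ≤ ε) ∧
    -- … and consequently ε-lumpability with respect to ξ and this p_L
    ((volume Z).toReal⁻¹ *
      ∫ x in X, (∫ y in X, |p x y - ∫ x', p x' y ∂ν (ξ x)|) * π x ≤ ε) := by
  have hπ0 : 0 ≤ᵐ[volume.restrict X] π :=
    ae_restrict_of_forall_mem hX fun x hx => (hπpos x hx).le
  have hπint : IntegrableOn π X := .of_integral_ne_zero (hπprob.trans_ne one_ne_zero)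
  let μ := (volume.restrict X).withDensity fun x => ENNReal.ofReal (π x)
  have : IsFiniteMeasure μ := isFiniteMeasure_withDensity_ofReal hπint.2
  have : IsFiniteMeasure (volume.restrict Z) := ⟨by simpa using hZfin⟩
  have hμ (h : (Fin n → ℝ) → ℝ) : ∫ x, h x ∂μ = ∫ x in X, h x * π x :=
    integral_withDensity_ofReal hπmeas.aemeasurable hπ0 h
  have hd : IsDisintegration ξ μ (volume.restrict Z) ν :=
    { ae_isProbabilityMeasure := ae_restrict_of_forall_mem hZ hνprob
      ae_ae_eq := ae_restrict_of_forall_mem hZ hνconc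
      integral_integral := fun h hh => (hνdis h <| (integrable_withDensity_ofReal_iff
        hπmeas.aemeasurable hπ0).1 hh).trans (hμ h).symm }
  have hp1 : ∀ᵐ x ∂μ, ∫ y in X, p x y = 1 :=
    (withDensity_absolutelyContinuous _ _).ae_le (ae_restrict_of_forall_mem hX hpnorm)
  have hZreal : (volume.restrict Z).real univ = (volume Z).toReal := by
    rw [measureReal_restrict_apply_univ, measureReal_def]
  rw [← hZreal] at hdiff ⊢
  rw [← hμ]
  exact differentially_lumpable_implies_lumpable_general hpmeas hpnonneg hp1 hξmeas hd hdiff
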